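/- arXiv:2212.04376 — 4 statements merged into one kernel-verified Lean document; each statement's English description precedes it below -/
import Mathlib

section
/- For every dimension d ≥ 1 and all integers k ≥ 0 and n ≥ 1 there exists a constant C = C(d, n, k) such that for every f ∈ C^n(ℝ^d), every x ∈ ℝ^d and every τ > 0: ∫_{ℝ^d} |z|^k |R_n f(z)| G_τ(z) dz ≤ C τ^{(k+n)/2} (K_τ * |D^n f|)(x), where R_n f is the order-n Taylor remainder of f at x. (In particular one may take C(d,n,k) = (1/(n−1)!) ∫_0^∞ s^{k+n+d−2} (2π)^{-d/2} e^{-s²/4} ds.) -/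
/-!
The integral form of the Taylor remainder along the segment from `x` to `x + z` gives
`|R_n f(z)| ≤ ‖z‖ⁿ ∫₀¹ |Dⁿf|(x + s z) ds` (`ofReal_abs_taylorRem_le`). Inserting this, exchanging
the integrals and substituting `w = s z` for each fixed `s` bounds the left-hand side by
`∫ |Dⁿf|(x + w) ‖w‖^(k+n) (2πτ)^(-d/2) (∫₀¹ s^(-(d+k+n)) e^(-‖w‖²/(2τs²)) ds) dw`.

With `a = ‖w‖/√τ` and `m = d + k + n`, the inner integral is at most a constant times
`a^(1-m) e^(-a²/4)` (`exists_lintegral_contraction_le`): since `s ≤ 1`, half of the exponent yields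
`e^(-a²/4)`, and the other half makes the rest scale-invariantly integrable in `s/a`. Since
`a^(k+n) a^(1-m) = a^(-(d-1))`, what remains is exactly the kernel `K_τ(w)` times `τ^((k+n)/2)`
(`weight_eq_Kt`), and the evenness of `K_τ` turns `x + w` into `x - w`.

All integrals are Lebesgue integrals with values in `[0, ∞]`, so only measurability is required to
exchange them. The right-hand side may be infinite.
-/

open MeasureTheory Real

noncomputable section

abbrev Euc (d : ℕ) := EuclideanSpace ℝ (Fin d)

/-- Iterated partial derivative `∂_{m 0} ⋯ ∂_{m (k-1)} f (x)`. -/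
noncomputable def pd {d : ℕ} (k : ℕ) (f : Euc d → ℝ) (x : Euc d) (m : Fin k → Fin d) : ℝ :=
  iteratedFDeriv ℝ k f x fun a => EuclideanSpace.single (m a) (1 : ℝ)

/-- `|D^k f|(x) = ∑_{|α| = k} |∂^α f (x)|` (sum over ordered index tuples). -/
noncomputable def Dnorm {d : ℕ} (k : ℕ) (f : Euc d → ℝ) (x : Euc d) : ℝ :=
  ∑ m : Fin k → Fin d, |pd k f x m|

/-- `|D^{≤k} f|(x) = ∑_{j=0}^{k} |D^j f|(x)`. -/
noncomputable def DnormLe {d : ℕ} (k : ℕ) (f : Euc d → ℝ) (x : Euc d) : ℝ :=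
  ∑ j ∈ Finset.range (k + 1), Dnorm j f x

/-- The kernel `K(z) = e^{-|z|²/4} / |z|^{d-1}`. -/
noncomputable def Kker {d : ℕ} (z : Euc d) : ℝ :=
  Real.exp (-‖z‖ ^ 2 / 4) / ‖z‖ ^ (d - 1)

/-- The rescaled kernel `K_τ(z) = τ^{-d/2} K(z/√τ)`. -/
noncomputable def Kt {d : ℕ} (τ : ℝ) (z : Euc d) : ℝ :=
  τ ^ (-(d : ℝ) / 2) * Kker ((Real.sqrt τ)⁻¹ • z)

/-- Convolution `(K_τ * φ)(x) = ∫ φ(x - z) K_τ(z) dz`. -/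
noncomputable def Kconv {d : ℕ} (τ : ℝ) (φ : Euc d → ℝ) (x : Euc d) : ℝ :=
  ∫ z, φ (x - z) * Kt τ z

/-- Hessian matrix `[∂_{ij} f (x)]`. -/
noncomputable def hess {d : ℕ} (f : Euc d → ℝ) (x : Euc d) : Matrix (Fin d) (Fin d) ℝ :=
  Matrix.of fun i j => pd 2 f x ![i, j]

/-- The first-order coefficient in the Laplace expansion:
`(1/2) u^{ij} ∂_{ij} r − (1/2) u_{jkℓ} u^{ij} u^{kℓ} ∂_i r
 + (1/8) r u_{ijk} u_{ℓmn} u^{ij} u^{kℓ} u^{mn}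
 + (1/12) r u_{ijk} u_{ℓmn} u^{iℓ} u^{jm} u^{kn} − (1/8) r u_{ijkℓ} u^{ij} u^{kℓ}`. -/
noncomputable def lap1 {d : ℕ} (u r : Euc d → ℝ) (xs : Euc d) : ℝ :=
  (1 / 2) * (∑ i : Fin d, ∑ j : Fin d, (hess u xs)⁻¹ i j * pd 2 r xs ![i, j])
    - (1 / 2) * (∑ i : Fin d, ∑ j : Fin d, ∑ k : Fin d, ∑ l : Fin d,
        pd 3 u xs ![j, k, l] * (hess u xs)⁻¹ i j * (hess u xs)⁻¹ k l * pd 1 r xs ![i])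
    + (1 / 8) * r xs * (∑ i : Fin d, ∑ j : Fin d, ∑ k : Fin d, ∑ l : Fin d, ∑ m : Fin d,
        ∑ n : Fin d, pd 3 u xs ![i, j, k] * pd 3 u xs ![l, m, n] *
          (hess u xs)⁻¹ i j * (hess u xs)⁻¹ k l * (hess u xs)⁻¹ m n)
    + (1 / 12) * r xs * (∑ i : Fin d, ∑ j : Fin d, ∑ k : Fin d, ∑ l : Fin d, ∑ m : Fin d,
        ∑ n : Fin d, pd 3 u xs ![i, j, k] * pd 3 u xs ![l, m, n] *
          (hess u xs)⁻¹ i l * (hess u xs)⁻¹ j m * (hess u xs)⁻¹ k n)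
    - (1 / 8) * r xs * (∑ i : Fin d, ∑ j : Fin d, ∑ k : Fin d, ∑ l : Fin d,
        pd 4 u xs ![i, j, k, l] * (hess u xs)⁻¹ i j * (hess u xs)⁻¹ k l)

/-- The Gaussian `G_τ(z) = (2πτ)^{-d/2} e^{-|z|²/(2τ)}`. -/
noncomputable def Gt {d : ℕ} (τ : ℝ) (z : Euc d) : ℝ :=
  (2 * Real.pi * τ) ^ (-(d : ℝ) / 2) * Real.exp (-‖z‖ ^ 2 / (2 * τ))

/-- Order-`n` Taylor remainder of `f` at `x`:
`R_n f(z) = f(x+z) − ∑_{k<n} (1/k!) ∂_{i_1…i_k} f(x) z^{i_1}⋯z^{i_k}`,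
where the Einstein sum over ordered tuples is `(1/k!) D^k f(x)[z,…,z]`. -/
noncomputable def taylorRem {d : ℕ} (n : ℕ) (f : Euc d → ℝ) (x z : Euc d) : ℝ :=
  f (x + z) - ∑ k ∈ Finset.range n,
    (1 / (Nat.factorial k : ℝ)) * iteratedFDeriv ℝ k f x (fun _ => z)

/-- Derivatives of `f` along a line are diagonal values of the iterated Fréchet derivative. -/
lemma iteratedDeriv_along_line {d n : ℕ} {f : Euc d → ℝ} (hf : ContDiff ℝ n f) (x z : Euc d)
    {j : ℕ} (hj : j ≤ n) (t : ℝ) :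
    iteratedDeriv j (fun t : ℝ => f (x + t • z)) t
      = iteratedFDeriv ℝ j f (x + t • z) (fun _ => z) := by
  have hg : ContDiff ℝ n (fun y => f (x + y)) := hf.comp (contDiff_const.add contDiff_id)
  have h := ContinuousLinearMap.iteratedFDeriv_comp_right
    (ContinuousLinearMap.toSpanSingleton ℝ z) hg t (i := j) (by exact_mod_cast hj)
  rw [iteratedFDeriv_comp_add_left'] at h
  rw [iteratedDeriv_eq_iteratedFDeriv]
  have h2 : ((fun y => f (x + y)) ∘ (ContinuousLinearMap.toSpanSingleton ℝ z))
      = (fun t : ℝ => f (x + t • z)) := by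
    ext t; simp [ContinuousLinearMap.toSpanSingleton_apply]
  rw [h2] at h
  rw [h]
  simp [ContinuousLinearMap.toSpanSingleton_apply]

lemma Dnorm_nonneg {d : ℕ} (n : ℕ) (f : Euc d → ℝ) (y : Euc d) : 0 ≤ Dnorm n f y :=
  Finset.sum_nonneg fun _ _ => abs_nonneg _

lemma continuous_Dnorm {d n : ℕ} {f : Euc d → ℝ} (hf : ContDiff ℝ n f) :
    Continuous (Dnorm n f) := by
  unfold Dnorm pd
  refine continuous_finsetSum _ fun m _ => Continuous.abs ?_
  exact (ContinuousMultilinearMap.apply ℝ (fun _ : Fin n => Euc d) ℝ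
    (fun a => EuclideanSpace.single (m a) (1 : ℝ))).continuous.comp
    (hf.continuous_iteratedFDeriv le_rfl)

lemma abs_iteratedFDeriv_diag_le {d : ℕ} (n : ℕ) (f : Euc d → ℝ) (y z : Euc d) :
    |iteratedFDeriv ℝ n f y (fun _ => z)| ≤ ‖z‖ ^ n * Dnorm n f y := by
  have hz : z = ∑ i : Fin d, z i • EuclideanSpace.single i (1 : ℝ) := by
    ext j; simp [Pi.single_apply]
  have h : iteratedFDeriv ℝ n f y (fun _ => z)
      = ∑ m : Fin n → Fin d, (∏ a, z (m a)) * pd n f y m := by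
    conv_lhs => rw [hz]
    rw [ContinuousMultilinearMap.map_sum]
    refine Finset.sum_congr rfl fun m _ => ?_
    rw [ContinuousMultilinearMap.map_smul_univ]
    rfl
  rw [h, Dnorm, Finset.mul_sum]
  refine (Finset.abs_sum_le_sum_abs _ _).trans (Finset.sum_le_sum fun m _ => ?_)
  rw [abs_mul, Finset.abs_prod]
  gcongr
  calc ∏ a, |z (m a)| ≤ ∏ _a : Fin n, ‖z‖ :=
        Finset.prod_le_prod (fun _ _ => abs_nonneg _) fun a _ => by
          simpa using PiLp.norm_apply_le z (m a)
    _ = ‖z‖ ^ n := by simp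

/-- Integral form of the Taylor remainder, with `(1-s)^(n-1)/(n-1)!` bounded by `1`. -/
lemma ofReal_abs_taylorRem_le {d n : ℕ} (hn : 1 ≤ n) {f : Euc d → ℝ} (hf : ContDiff ℝ n f)
    (x z : Euc d) :
    ENNReal.ofReal |taylorRem n f x z|
      ≤ ∫⁻ s in Set.Ioc (0 : ℝ) 1, ENNReal.ofReal (‖z‖ ^ n * Dnorm n f (x + s • z)) := by
  obtain ⟨n, rfl⟩ : ∃ p, n = p + 1 := ⟨n - 1, by omega⟩
  have hg : ContDiff ℝ (n + 1 : ℕ) (fun t : ℝ => f (x + t • z)) :=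
    hf.comp (by fun_prop)
  have huniq : UniqueDiffOn ℝ (Set.uIcc (0 : ℝ) 1) := uniqueDiffOn_uIcc zero_ne_one
  have hder : ∀ j ≤ n + 1, ∀ t ∈ Set.uIcc (0 : ℝ) 1,
      iteratedDerivWithin j (fun t : ℝ => f (x + t • z)) (Set.uIcc (0 : ℝ) 1) t
        = iteratedFDeriv ℝ j f (x + t • z) (fun _ => z) := fun j hj t ht => by
    rw [iteratedDerivWithin_eq_iteratedDeriv huniq
      ((hg.of_le (by exact_mod_cast hj)).contDiffAt) ht]
    exact iteratedDeriv_along_line hf x z hj t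
  have hT := taylor_integral_remainder (x₀ := 0) (x := 1) (n := n) hg.contDiffOn
  rw [taylor_within_apply] at hT
  have hR : taylorRem (n + 1) f x z = ∫ t in (0 : ℝ)..1, ((1 - t) ^ n / (n.factorial : ℝ)) •
      iteratedDerivWithin (n + 1) (fun t : ℝ => f (x + t • z)) (Set.uIcc (0 : ℝ) 1) t := by
    rw [← hT, taylorRem]
    simp only [one_smul]
    congr 1
    refine Finset.sum_congr rfl fun j hj => ?_
    rw [hder j (by rw [Finset.mem_range] at hj; omega) 0 (by simp)]
    simp
  rw [hR, intervalIntegral.integral_of_le zero_le_one, ← Real.norm_eq_abs, ofReal_norm]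
  refine (enorm_integral_le_lintegral_enorm _).trans ?_
  refine setLIntegral_mono' measurableSet_Ioc fun t ht => ?_
  rw [← ofReal_norm]
  apply ENNReal.ofReal_le_ofReal
  rw [hder (n + 1) le_rfl t (by rw [Set.uIcc_of_le zero_le_one]; exact ⟨ht.1.le, ht.2⟩),
    norm_smul, Real.norm_eq_abs, Real.norm_eq_abs]
  have h1 : |(1 - t) ^ n / (n.factorial : ℝ)| ≤ 1 := by
    have h0 : 0 ≤ 1 - t := by linarith [ht.2]
    rw [abs_of_nonneg (by positivity), div_le_one (by positivity)]
    calc (1 - t) ^ n ≤ 1 := pow_le_one₀ h0 (by linarith [ht.1])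
      _ ≤ n.factorial := by exact_mod_cast n.factorial_pos
  calc _ ≤ 1 * |iteratedFDeriv ℝ (n + 1) f (x + t • z) (fun _ => z)| := by gcongr
    _ ≤ _ := by rw [one_mul]; exact abs_iteratedFDeriv_diag_le _ _ _ _

lemma exists_pow_mul_exp_le (j : ℕ) : ∃ B : ℝ, 0 < B ∧
    ∀ r : ℝ, 0 ≤ r → r ^ j * Real.exp (-r ^ 2 / 4) ≤ B := by
  refine ⟨Real.exp 1 * j.factorial, by positivity, fun r hr => ?_⟩
  have h1 : r ^ j ≤ Real.exp r * j.factorial := by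
    have := Real.pow_div_factorial_le_exp r hr j
    rwa [div_le_iff₀ (by positivity)] at this
  calc r ^ j * Real.exp (-r ^ 2 / 4) ≤ Real.exp r * j.factorial * Real.exp (-r ^ 2 / 4) := by gcongr
    _ = Real.exp (r + -r ^ 2 / 4) * j.factorial := by rw [Real.exp_add]; ring
    _ ≤ Real.exp 1 * j.factorial := by
      gcongr
      nlinarith [sq_nonneg (r - 2)]

lemma lintegral_comp_smul_pos {d : ℕ} {s : ℝ} (hs : 0 < s) {F : Euc d → ENNReal}
    (hF : Measurable F) :
    ∫⁻ z, F (s • z) = ENNReal.ofReal ((s ^ d)⁻¹) * ∫⁻ w, F w := by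
  have h := Measure.map_addHaar_smul (volume : Measure (Euc d)) hs.ne'
  rw [← lintegral_map hF (measurable_const_smul s), h, lintegral_smul_measure, smul_eq_mul]
  simp [abs_of_pos hs]

/-- The integral over the contraction parameter. Half of the Gaussian weight is extracted using
`s ≤ 1`; the other half absorbs the singularity, leaving `a⁻ᵐ / (1 + (s/a)²)`, whose integral over
the line is `π a¹⁻ᵐ`. -/
lemma exists_lintegral_contraction_le (m : ℕ) (hm : 2 ≤ m) : ∃ C : ℝ, 0 < C ∧ ∀ a : ℝ, 0 < a →
    ∫⁻ s in Set.Ioc (0 : ℝ) 1, ENNReal.ofReal ((s ^ m)⁻¹ * Real.exp (-(a / s) ^ 2 / 2))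
      ≤ ENNReal.ofReal (C * (a / a ^ m * Real.exp (-a ^ 2 / 4))) := by
  obtain ⟨B₁, hB₁, h₁⟩ := exists_pow_mul_exp_le m
  obtain ⟨B₂, hB₂, h₂⟩ := exists_pow_mul_exp_le (m - 2)
  refine ⟨(B₁ + B₂) * π, by positivity, fun a ha => ?_⟩
  have hpt : ∀ s ∈ Set.Ioc (0 : ℝ) 1, (s ^ m)⁻¹ * Real.exp (-(a / s) ^ 2 / 2)
      ≤ (B₁ + B₂) * (a ^ m)⁻¹ * Real.exp (-a ^ 2 / 4) * (1 + (s / a) ^ 2)⁻¹ := fun s hs => by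
    have hs0 := hs.1
    set r := a / s with hr
    have hr0 : 0 < r := div_pos ha hs0
    have hra : a ≤ r := by rw [hr, le_div_iff₀ hs0]; nlinarith [hs.2]
    have hsr : s = a / r := by rw [hr]; field_simp
    have hexp : Real.exp (-r ^ 2 / 2) ≤ Real.exp (-r ^ 2 / 4) * Real.exp (-a ^ 2 / 4) := by
      rw [← Real.exp_add]
      apply Real.exp_le_exp.2
      nlinarith
    have hkey : r ^ m * Real.exp (-r ^ 2 / 4) * (1 + (s / a) ^ 2) ≤ B₁ + B₂ := by
      obtain ⟨p, rfl⟩ : ∃ p, m = p + 2 := ⟨m - 2, by omega⟩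
      have e : (s / a) ^ 2 = (r ^ 2)⁻¹ := by rw [hsr]; field_simp
      rw [e]
      have e2 : r ^ (p + 2) * Real.exp (-r ^ 2 / 4) * (1 + (r ^ 2)⁻¹)
        = r ^ (p + 2) * Real.exp (-r ^ 2 / 4) + r ^ p * Real.exp (-r ^ 2 / 4) := by
        field_simp
        ring
      rw [e2]
      exact add_le_add (h₁ r hr0.le) (by simpa using h₂ r hr0.le)
    have hden : 0 < 1 + (s / a) ^ 2 := by positivity
    have e3 : (s ^ m)⁻¹ = r ^ m * (a ^ m)⁻¹ := by
      rw [hr, div_pow]; field_simp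
    rw [e3, ← div_eq_mul_inv _ (1 + (s / a) ^ 2), le_div_iff₀ hden]
    calc r ^ m * (a ^ m)⁻¹ * Real.exp (-r ^ 2 / 2) * (1 + (s / a) ^ 2)
        ≤ r ^ m * (a ^ m)⁻¹ * (Real.exp (-r ^ 2 / 4) * Real.exp (-a ^ 2 / 4))
          * (1 + (s / a) ^ 2) := by gcongr
      _ = (r ^ m * Real.exp (-r ^ 2 / 4) * (1 + (s / a) ^ 2))
          * ((a ^ m)⁻¹ * Real.exp (-a ^ 2 / 4)) := by ring
      _ ≤ (B₁ + B₂) * ((a ^ m)⁻¹ * Real.exp (-a ^ 2 / 4)) := by gcongr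
      _ = _ := by ring
  have hint : Integrable fun s : ℝ => (1 + (s / a) ^ 2)⁻¹ :=
    integrable_inv_one_add_sq.comp_div ha.ne'
  have hval : ∫ s : ℝ, (1 + (s / a) ^ 2)⁻¹ = a * π := by
    have := Measure.integral_comp_div (fun s : ℝ => (1 + s ^ 2)⁻¹) a
    rw [this, integral_univ_inv_one_add_sq, abs_of_pos ha, smul_eq_mul]
  calc _ ≤ ∫⁻ s in Set.Ioc (0 : ℝ) 1, ENNReal.ofReal
          ((B₁ + B₂) * (a ^ m)⁻¹ * Real.exp (-a ^ 2 / 4) * (1 + (s / a) ^ 2)⁻¹) :=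
        setLIntegral_mono' measurableSet_Ioc fun s hs => ENNReal.ofReal_le_ofReal (hpt s hs)
    _ ≤ ∫⁻ s : ℝ, ENNReal.ofReal
          ((B₁ + B₂) * (a ^ m)⁻¹ * Real.exp (-a ^ 2 / 4) * (1 + (s / a) ^ 2)⁻¹) :=
        setLIntegral_le_lintegral _ _
    _ = ENNReal.ofReal (∫ s : ℝ,
          (B₁ + B₂) * (a ^ m)⁻¹ * Real.exp (-a ^ 2 / 4) * (1 + (s / a) ^ 2)⁻¹) :=
        (ofReal_integral_eq_lintegral_ofReal (hint.const_mul _)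
          (Filter.Eventually.of_forall fun s => by positivity)).symm
    _ ≤ _ := by
        rw [integral_const_mul, hval]
        apply ENNReal.ofReal_le_ofReal
        apply le_of_eq
        field_simp

lemma Gt_nonneg {d : ℕ} {τ : ℝ} (hτ : 0 < τ) (z : Euc d) : 0 ≤ Gt τ z := by
  unfold Gt; positivity

/-- In terms of the radius `a = ‖w‖ / √τ`, the moment weight and the contraction integral combine
to the kernel `K_τ`. -/
lemma weight_eq_Kt {d : ℕ} (p : ℕ) (hd : 1 ≤ d) {τ : ℝ} (hτ : 0 < τ) {w : Euc d}
    (hw : w ≠ 0) (C : ℝ) :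
    ‖w‖ ^ p * (2 * π * τ) ^ (-(d : ℝ) / 2) *
      (C * ((‖w‖ / √τ) / (‖w‖ / √τ) ^ (d + p) * Real.exp (-(‖w‖ / √τ) ^ 2 / 4)))
      = (C * (2 * π) ^ (-(d : ℝ) / 2)) * τ ^ ((p : ℝ) / 2) * Kt τ w := by
  have hsq : 0 < √τ := Real.sqrt_pos.2 hτ
  have hw0 : 0 < ‖w‖ := norm_pos_iff.2 hw
  have hnorm : ‖(√τ)⁻¹ • w‖ = ‖w‖ / √τ := by
    rw [norm_smul, norm_inv, Real.norm_of_nonneg hsq.le]; field_simp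
  have hwa : ‖w‖ = √τ * (‖w‖ / √τ) := by field_simp
  have hτp : τ ^ ((p : ℝ) / 2) = √τ ^ p := by
    rw [Real.sqrt_eq_rpow, ← Real.rpow_natCast, ← Real.rpow_mul hτ.le]
    congr 1; ring
  unfold Kt Kker
  rw [hnorm, Real.mul_rpow (by positivity) hτ.le, hτp]
  set a := ‖w‖ / √τ
  have ha : 0 < a := by positivity
  rw [hwa, mul_pow]
  obtain ⟨e, rfl⟩ : ∃ e, d = e + 1 := ⟨d - 1, by omega⟩
  simp only [Nat.add_sub_cancel]
  field_simp
  ring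

/-- **Taylor remainder Gaussian bound** (Lemma 4.7 of the paper): for every `d ≥ 1`,
`k ≥ 0` and `n ≥ 1` there is a constant `C = C(d,n,k)` with
`∫ |z|^k |R_n f(z)| G_τ(z) dz ≤ C τ^{(k+n)/2} (K_τ * |D^n f|)(x)`
for every `f ∈ C^n`, every `x` and every `τ > 0`. -/
theorem taylor_remainder_gaussian_bound (d k n : ℕ) (hd : 1 ≤ d) (hn : 1 ≤ n) :
    ∃ C : ℝ, 0 < C ∧
      ∀ f : Euc d → ℝ, ContDiff ℝ n f → ∀ x : Euc d, ∀ τ : ℝ, 0 < τ →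
        (∫⁻ z, ENNReal.ofReal (‖z‖ ^ k * |taylorRem n f x z| * Gt τ z)) ≤
          ENNReal.ofReal (C * τ ^ (((k : ℝ) + (n : ℝ)) / 2)) *
            ∫⁻ z, ENNReal.ofReal (Dnorm n f (x - z) * Kt τ z) := by
  obtain ⟨C, hC, hCle⟩ := exists_lintegral_contraction_le (d + (k + n)) (by omega)
  refine ⟨C * (2 * π) ^ (-(d : ℝ) / 2), by positivity, fun f hf x τ hτ => ?_⟩
  have hD : Measurable (Dnorm n f) := (continuous_Dnorm hf).measurable
  have hsq : 0 < √τ := Real.sqrt_pos.2 hτ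
  have hG : Measurable (Gt τ : Euc d → ℝ) := by unfold Gt; fun_prop
  have : Nonempty (Fin d) := ⟨⟨0, hd⟩⟩
  calc ∫⁻ z, ENNReal.ofReal (‖z‖ ^ k * |taylorRem n f x z| * Gt τ z)
      ≤ ∫⁻ z, ∫⁻ s in Set.Ioc (0 : ℝ) 1,
          ENNReal.ofReal (‖z‖ ^ (k + n) * Dnorm n f (x + s • z) * Gt τ z) := by
        refine lintegral_mono fun z => ?_
        have hG0 := Gt_nonneg hτ z
        have e : ENNReal.ofReal (‖z‖ ^ k * |taylorRem n f x z| * Gt τ z)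
            = ENNReal.ofReal (‖z‖ ^ k * Gt τ z) * ENNReal.ofReal |taylorRem n f x z| := by
          rw [← ENNReal.ofReal_mul (by positivity)]; congr 1; ring
        rw [e]
        refine (mul_le_mul_right (ofReal_abs_taylorRem_le hn hf x z) _).trans ?_
        rw [← lintegral_const_mul _ (by fun_prop)]
        refine lintegral_mono fun s => ?_
        rw [← ENNReal.ofReal_mul (by positivity)]
        apply ENNReal.ofReal_le_ofReal
        apply le_of_eq
        ring
    _ = ∫⁻ s in Set.Ioc (0 : ℝ) 1, ∫⁻ z,
          ENNReal.ofReal (‖z‖ ^ (k + n) * Dnorm n f (x + s • z) * Gt τ z) :=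
        lintegral_lintegral_swap (by fun_prop)
    _ = ∫⁻ s in Set.Ioc (0 : ℝ) 1, ∫⁻ w, ENNReal.ofReal (Dnorm n f (x + w)
          * (‖w‖ ^ (k + n) * (2 * π * τ) ^ (-(d : ℝ) / 2)
          * ((s ^ (d + (k + n)))⁻¹ * Real.exp (-((‖w‖ / √τ) / s) ^ 2 / 2)))) := by
        -- The substitution `w = s • z`, with Jacobian `s⁻ᵈ`.
        refine setLIntegral_congr_fun measurableSet_Ioc fun s hs => ?_
        have hs0 := hs.1
        have e : ∀ z : Euc d, ENNReal.ofReal (‖z‖ ^ (k + n) * Dnorm n f (x + s • z) * Gt τ z)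
            = (fun w => ENNReal.ofReal (‖s⁻¹ • w‖ ^ (k + n) * Dnorm n f (x + w)
              * Gt τ (s⁻¹ • w))) (s • z) := fun z => by
          simp only [smul_smul, inv_mul_cancel₀ hs0.ne', one_smul]
        simp only [e]
        rw [lintegral_comp_smul_pos (F := fun w => ENNReal.ofReal (‖s⁻¹ • w‖ ^ (k + n)
          * Dnorm n f (x + w) * Gt τ (s⁻¹ • w))) hs0 (by fun_prop),
          ← lintegral_const_mul _ (by fun_prop)]
        refine lintegral_congr fun w => ?_
        rw [← ENNReal.ofReal_mul (by positivity)]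
        congr 1
        have hnorm : ‖s⁻¹ • w‖ = ‖w‖ / s := by
          rw [norm_smul, norm_inv, Real.norm_of_nonneg hs0.le]; field_simp
        unfold Gt
        have e1 : -((‖w‖ / √τ) / s) ^ 2 / 2 = -(‖w‖ / s) ^ 2 / (2 * τ) := by
          rw [div_pow, div_pow, Real.sq_sqrt hτ.le, div_pow]; field_simp
        rw [hnorm, e1, div_pow ‖w‖ s (k + n), pow_add s d (k + n)]
        field_simp
    _ = ∫⁻ w, ∫⁻ s in Set.Ioc (0 : ℝ) 1, ENNReal.ofReal (Dnorm n f (x + w)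
          * (‖w‖ ^ (k + n) * (2 * π * τ) ^ (-(d : ℝ) / 2)
          * ((s ^ (d + (k + n)))⁻¹ * Real.exp (-((‖w‖ / √τ) / s) ^ 2 / 2)))) :=
        lintegral_lintegral_swap (by fun_prop)
    _ ≤ ∫⁻ w, ENNReal.ofReal (C * (2 * π) ^ (-(d : ℝ) / 2) * τ ^ (((k : ℝ) + (n : ℝ)) / 2))
          * ENNReal.ofReal (Dnorm n f (x + w) * Kt τ w) := by
        refine lintegral_mono_ae ?_
        -- For `d ≥ 2` the kernel takes the junk value `0` at the origin, a null set as `d ≥ 1`.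
        filter_upwards [Measure.ae_ne volume (0 : Euc d)] with w hw
        have hD0 := Dnorm_nonneg n f (x + w)
        have e : ∀ s : ℝ, ENNReal.ofReal (Dnorm n f (x + w)
          * (‖w‖ ^ (k + n) * (2 * π * τ) ^ (-(d : ℝ) / 2)
          * ((s ^ (d + (k + n)))⁻¹ * Real.exp (-((‖w‖ / √τ) / s) ^ 2 / 2))))
          = ENNReal.ofReal (Dnorm n f (x + w)
          * (‖w‖ ^ (k + n) * (2 * π * τ) ^ (-(d : ℝ) / 2)))
          * ENNReal.ofReal ((s ^ (d + (k + n)))⁻¹ * Real.exp (-((‖w‖ / √τ) / s) ^ 2 / 2)) :=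
          fun s => by
            rw [← ENNReal.ofReal_mul (by positivity)]; congr 1; ring
        simp only [e]
        rw [lintegral_const_mul _ (by fun_prop)]
        have ha : 0 < ‖w‖ / √τ := div_pos (norm_pos_iff.2 hw) hsq
        refine (mul_le_mul_right (hCle _ ha) _).trans ?_
        rw [← ENNReal.ofReal_mul (by positivity), ← ENNReal.ofReal_mul (by positivity)]
        apply ENNReal.ofReal_le_ofReal
        rw [mul_assoc (Dnorm n f (x + w)), weight_eq_Kt (k + n) hd hτ hw C]
        push_cast
        apply le_of_eq
        ring
    _ = _ := by
        have hK : Measurable (Kt τ : Euc d → ℝ) := by unfold Kt Kker; fun_prop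
        rw [lintegral_const_mul _ (by fun_prop)]
        congr 1
        rw [← lintegral_neg_eq_self]
        refine lintegral_congr fun z => ?_
        congr 2
        simp [Kt, Kker]
end
end

section
/- (Isserlis' formula.) Let A be a symmetric positive definite d×d real matrix, let ε > 0, and let p_ε(z) = √(det A) (2πε)^{-d/2} e^{-(1/(2ε)) A_{ij} z^i z^j} be the density of the centered Gaussian measure on ℝ^d with covariance matrix ε A^{-1}. Then for every n ≥ 1 and all indices i_1, …, i_{2n} ∈ {1, …, d}: ∫_{ℝ^d} z^{i_1} ⋯ z^{i_{2n}} p_ε(z) dz = ε^n Σ_P ∏_{{a,b} ∈ P} (A^{-1})_{i_a i_b}, where the sum runs over all partitions P of {1, …, 2n} into n unordered pairs {a, b}. -/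
/-!
Isserlis' formula follows from Gaussian integration by parts. Write `Q` for the quadratic form of
`A` and `g = exp (-Q / (2ε))`. The derivative of `g` in the direction `A⁻¹ e_i` is `-ε⁻¹ z^i g`, so
moving this derivative onto the remaining monomial gives, for a fixed label `a`,
`∫ ∏_{c ∈ S} z^{i_c} g = ε ∑_{b ≠ a} (A⁻¹)_{i_b i_a} ∫ ∏_{c ∈ S \ {a, b}} z^{i_c} g`
(`integral_by_parts`). The sum over pairings obeys the same recursion, since a pairing of `S` is a
choice of partner `b` for `a` and a pairing of `S \ {a, b}` (`sum_pairings_eq`). The two sides then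
agree by induction on the cardinality of `S` (`moment_eq`); the case `S = ∅` is the normalization of
the density, computed by the substitution `w = B z` with `A = Bᵀ B` (`integral_gaussian_quad`).
-/

open MeasureTheory Real

noncomputable section

/-! ### Gaussian integrals -/

/-- The quadratic form `z ↦ A_{ij} z^i z^j`. -/
def quad {d : ℕ} (A : Matrix (Fin d) (Fin d) ℝ) (z : Euc d) : ℝ :=
  ∑ i : Fin d, ∑ j : Fin d, A i j * z i * z j

open scoped MatrixOrder in
/-- A positive definite form is the squared norm of a linear map, namely of any `B` with
`A = Bᵀ B`. This gives both the change of variables computing the total mass and the coercivity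
of the form. -/
lemma exists_sqrt {d : ℕ} {A : Matrix (Fin d) (Fin d) ℝ} (hpd : A.PosDef) :
    ∃ L : Euc d →L[ℝ] Euc d, (∀ z, quad A z = ‖L z‖ ^ 2) ∧ |L.det| = √A.det := by
  obtain ⟨B, hB⟩ := CStarAlgebra.nonneg_iff_eq_star_mul_self.1
    (Matrix.nonneg_iff_posSemidef.2 hpd.posSemidef)
  have hB' : A = B.transpose * B := by simpa [Matrix.star_eq_conjTranspose] using hB
  refine ⟨Matrix.toEuclideanCLM (𝕜 := ℝ) B, fun z => ?_, ?_⟩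
  · rw [EuclideanSpace.norm_sq_eq]
    simp only [Matrix.ofLp_toEuclideanCLM, Real.norm_eq_abs, sq_abs]
    have h1 : quad A z = z.ofLp ⬝ᵥ (A.mulVec z.ofLp) := by
      simp only [quad, dotProduct, Matrix.mulVec, Finset.mul_sum]
      exact Finset.sum_congr rfl fun i _ => Finset.sum_congr rfl fun j _ => by ring
    have h2 : ∑ i, (B.mulVec z.ofLp) i ^ 2 = (B.mulVec z.ofLp) ⬝ᵥ (B.mulVec z.ofLp) := by
      simp only [dotProduct, sq]
    rw [h1, h2, hB', ← Matrix.mulVec_mulVec, Matrix.dotProduct_mulVec, Matrix.vecMul_transpose]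
  · have hdet : (Matrix.toEuclideanCLM (𝕜 := ℝ) B).det = B.det := by
      rw [ContinuousLinearMap.det, Matrix.coe_toEuclideanCLM_eq_toEuclideanLin,
        Matrix.toEuclideanLin, Matrix.toLpLin_eq_toLin, LinearMap.det_toLin]
    rw [hdet, hB', Matrix.det_mul, Matrix.det_transpose, Real.sqrt_mul_self_eq_abs]

lemma exists_quad_lower {d : ℕ} {A : Matrix (Fin d) (Fin d) ℝ} (hpd : A.PosDef) :
    ∃ c : ℝ, 0 < c ∧ ∀ z : Euc d, c * ‖z‖ ^ 2 ≤ quad A z := by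
  obtain ⟨L, hL, hdet⟩ := exists_sqrt hpd
  have hne : L.det ≠ 0 := by
    rw [← abs_pos, hdet]; exact Real.sqrt_pos.2 hpd.det_pos
  let e := L.toContinuousLinearEquivOfDetNeZero hne
  let C : Euc d →L[ℝ] Euc d := e.symm
  refine ⟨((‖C‖ + 1) ^ 2)⁻¹, by positivity, fun z => ?_⟩
  have h1 : C (L z) = z := e.symm_apply_apply z
  have h2 : ‖z‖ ≤ (‖C‖ + 1) * ‖L z‖ := by
    calc ‖z‖ = ‖C (L z)‖ := by rw [h1]
      _ ≤ ‖C‖ * ‖L z‖ := C.le_opNorm _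
      _ ≤ _ := by gcongr; linarith
  rw [hL, inv_mul_le_iff₀ (by positivity), ← mul_pow]
  gcongr

lemma continuous_quad {d : ℕ} (A : Matrix (Fin d) (Fin d) ℝ) : Continuous (quad A) := by
  unfold quad; fun_prop

lemma integrable_exp_neg_mul_sq_norm {d : ℕ} {b : ℝ} (hb : 0 < b) :
    Integrable (fun z : Euc d => rexp (-b * ‖z‖ ^ 2)) := by
  have h := (GaussianFourier.integrable_cexp_neg_mul_sq_norm_add (V := Euc d) (b := (b : ℂ))
    (by simpa using hb) 0 0).norm
  refine h.congr (Filter.Eventually.of_forall fun z => ?_)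
  simp only [Complex.norm_exp]
  congr 1
  norm_cast
  simp

/-- Monomials are integrable against the Gaussian: half of the quadratic decay absorbs the
polynomial growth. -/
lemma integrable_monomial_mul {d : ℕ} {A : Matrix (Fin d) (Fin d) ℝ} (hpd : A.PosDef)
    {k : ℝ} (hk : 0 < k) {ι : Type*} (S : Finset ι) (idx : ι → Fin d) :
    Integrable (fun z : Euc d => (∏ a ∈ S, z (idx a)) * rexp (-k * quad A z)) := by
  obtain ⟨c, hc, hq⟩ := exists_quad_lower hpd
  set b := k * c / 2 with hb
  have hbpos : 0 < b := by positivity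
  set m := S.card
  have hcont : Continuous (fun z : Euc d => (∏ a ∈ S, z (idx a)) * rexp (-k * quad A z)) := by
    have := continuous_quad A
    fun_prop
  -- The series of `exp` bounds `(t ^ m) ^ 2`; then `t ^ m ≤ 1 + (t ^ m) ^ 2` avoids square roots.
  have hpow : ∀ t : ℝ, 0 ≤ t → t ^ m ≤ (1 + m.factorial / b ^ m) * rexp (b * t ^ 2) := by
    intro t ht
    have h1 : (b * t ^ 2) ^ m / m.factorial ≤ rexp (b * t ^ 2) :=
      Real.pow_div_factorial_le_exp _ (by positivity) m
    have h2 : (t ^ m) ^ 2 ≤ m.factorial / b ^ m * rexp (b * t ^ 2) := by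
      have : (t ^ m) ^ 2 = m.factorial / b ^ m * ((b * t ^ 2) ^ m / m.factorial) := by
        have := Nat.factorial_ne_zero m
        field_simp
        ring
      rw [this]
      gcongr
    have h3 : 1 ≤ rexp (b * t ^ 2) := Real.one_le_exp (by positivity)
    nlinarith [sq_nonneg (t ^ m - 1)]
  refine ((integrable_exp_neg_mul_sq_norm (d := d) hbpos).const_mul
    (1 + m.factorial / b ^ m)).mono' hcont.aestronglyMeasurable
    (Filter.Eventually.of_forall fun z => ?_)
  rw [norm_mul, Real.norm_of_nonneg (Real.exp_pos _).le, norm_prod]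
  calc (∏ a ∈ S, ‖z (idx a)‖) * rexp (-k * quad A z)
      ≤ ‖z‖ ^ m * rexp (-k * (c * ‖z‖ ^ 2)) := by
        gcongr ?_ * rexp ?_
        · exact (Finset.prod_le_prod (fun _ _ => norm_nonneg _)
            fun a _ => PiLp.norm_apply_le z (idx a)).trans_eq (Finset.prod_const _)
        · nlinarith [hq z]
    _ ≤ ((1 + m.factorial / b ^ m) * rexp (b * ‖z‖ ^ 2)) * rexp (-k * (c * ‖z‖ ^ 2)) := by
        gcongr
        exact hpow _ (norm_nonneg z)
    _ = _ := by
        rw [mul_assoc, ← Real.exp_add]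
        congr 2
        rw [hb]; ring

/-- The Gaussian density has total mass `1`, by substituting `w = B z` where `A = Bᵀ B`. -/
lemma integral_gaussian_quad {d : ℕ} {A : Matrix (Fin d) (Fin d) ℝ} (hpd : A.PosDef)
    {ε : ℝ} (hε : 0 < ε) :
    ∫ z : Euc d, √A.det * (2 * π * ε) ^ (-(d : ℝ) / 2) * rexp (-(1 / (2 * ε)) * quad A z) = 1 := by
  obtain ⟨L, hL, hdet⟩ := exists_sqrt hpd
  have hne : L.det ≠ 0 := by
    rw [← abs_pos, hdet]; exact Real.sqrt_pos.2 hpd.det_pos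
  let e := L.toContinuousLinearEquivOfDetNeZero hne
  have hbij : Function.Bijective L := e.bijective
  have h := integral_image_eq_integral_abs_det_fderiv_smul (volume : Measure (Euc d))
    (f := L) (f' := fun _ => L) MeasurableSet.univ
    (fun x _ => L.hasFDerivAt.hasFDerivWithinAt) hbij.1.injOn
    (fun z => rexp (-(1 / (2 * ε)) * ‖z‖ ^ 2))
  rw [Set.image_univ, hbij.2.range_eq, Measure.restrict_univ,
    GaussianFourier.integral_rexp_neg_mul_sq_norm (by positivity)] at h
  simp only [hdet, smul_eq_mul, ← hL, finrank_euclideanSpace, Fintype.card_fin] at h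
  have h2 : ∀ z : Euc d, √A.det * (2 * π * ε) ^ (-(d : ℝ) / 2) * rexp (-(1 / (2 * ε)) * quad A z)
      = (2 * π * ε) ^ (-(d : ℝ) / 2) * (√A.det * rexp (-(1 / (2 * ε)) * quad A z)) :=
    fun z => by ring
  simp_rw [h2]
  rw [integral_const_mul, ← h, show π / (1 / (2 * ε)) = 2 * π * ε by field_simp,
    ← Real.rpow_add (by positivity), neg_div, neg_add_cancel, Real.rpow_zero]

/-- The direction `A⁻¹ e_i` is chosen so that differentiating `exp (-k Q)` along it brings down
exactly the coordinate `z^i`, up to the factor `-2k`. -/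
lemma hasLineDerivAt_gaussian {d : ℕ} {A : Matrix (Fin d) (Fin d) ℝ} (hsymm : A.IsSymm)
    (hpd : A.PosDef) (k : ℝ) (i : Fin d) (z : Euc d) :
    HasLineDerivAt ℝ (fun z : Euc d => rexp (-k * quad A z))
      (-(2 * k) * z i * rexp (-k * quad A z)) z (WithLp.toLp 2 fun j => A⁻¹ j i) := by
  set v : Euc d := WithLp.toLp 2 fun j => A⁻¹ j i with hv
  have hmul : A * A⁻¹ = 1 := Matrix.mul_nonsing_inv A hpd.det_pos.ne'.isUnit
  have hAv : ∀ l, ∑ j, A l j * v j = if l = i then 1 else 0 := fun l => by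
    have := congrFun (congrFun hmul l) i
    rwa [Matrix.mul_apply, Matrix.one_apply] at this
  have h1 : HasDerivAt (fun t : ℝ => quad A (z + t • v))
      (∑ l, ∑ j, (A l j * v l * z j + A l j * z l * v j)) 0 := by
    unfold quad
    refine HasDerivAt.fun_sum fun l _ => HasDerivAt.fun_sum fun j _ => ?_
    have hc : ∀ j, HasDerivAt (fun t : ℝ => (z + t • v) j) (v j) 0 := fun j => by
      simpa using ((hasDerivAt_id (0 : ℝ)).mul_const (v j)).const_add (z j)
    have := ((hc l).const_mul (A l j)).fun_mul (hc j)
    simpa using this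
  have h2 : ∑ l, ∑ j, (A l j * v l * z j + A l j * z l * v j) = 2 * z i := by
    simp_rw [Finset.sum_add_distrib]
    rw [Finset.sum_comm]
    have e1 : ∀ j l, A l j * v l * z j = z j * (A j l * v l) := fun j l => by
      rw [hsymm.apply j l]; ring
    have e2 : ∀ l j, A l j * z l * v j = z l * (A l j * v j) := fun l j => by ring
    simp_rw [e1, e2, ← Finset.mul_sum, hAv]
    simp
    ring
  rw [h2] at h1
  have h3 := (h1.const_mul (-k)).exp
  unfold HasLineDerivAt
  refine h3.congr_deriv ?_
  simp only [zero_smul, add_zero]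
  ring

lemma hasLineDerivAt_monomial {d : ℕ} {ι : Type*} [DecidableEq ι] (S : Finset ι) (idx : ι → Fin d)
    (z v : Euc d) :
    HasLineDerivAt ℝ (fun z : Euc d => ∏ a ∈ S, z (idx a))
      (∑ b ∈ S, v (idx b) * ∏ a ∈ S.erase b, z (idx a)) z v := by
  have hc : ∀ j, HasDerivAt (fun t : ℝ => (z + t • v) j) (v j) 0 := fun j => by
    simpa using ((hasDerivAt_id (0 : ℝ)).mul_const (v j)).const_add (z j)
  have := HasDerivAt.fun_finsetProd (u := S) fun a _ => hc (idx a)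
  unfold HasLineDerivAt
  refine this.congr_deriv ?_
  exact Finset.sum_congr rfl fun b _ => by simp [mul_comm]

/-- Integration by parts in the direction `A⁻¹ e_{idx a}`, applied to the monomial over `S \ {a}`:
a moment is expressed through moments of degree lower by two. -/
lemma integral_by_parts {d : ℕ} {A : Matrix (Fin d) (Fin d) ℝ} (hsymm : A.IsSymm)
    (hpd : A.PosDef) {k : ℝ} (hk : 0 < k) {ι : Type*} [DecidableEq ι] (S : Finset ι)
    (idx : ι → Fin d) {a : ι} (ha : a ∈ S) :
    2 * k * ∫ z : Euc d, (∏ c ∈ S, z (idx c)) * rexp (-k * quad A z) =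
      ∑ b ∈ S.erase a, A⁻¹ (idx b) (idx a) *
        ∫ z : Euc d, (∏ c ∈ (S.erase a).erase b, z (idx c)) * rexp (-k * quad A z) := by
  have hint := fun T : Finset ι => integrable_monomial_mul hpd hk T idx
  have e1 : ∀ z : Euc d, (∑ b ∈ S.erase a, A⁻¹ (idx b) (idx a) *
      ∏ c ∈ (S.erase a).erase b, z (idx c)) * rexp (-k * quad A z) =
      ∑ b ∈ S.erase a, A⁻¹ (idx b) (idx a) *
        ((∏ c ∈ (S.erase a).erase b, z (idx c)) * rexp (-k * quad A z)) := fun z => by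
    rw [Finset.sum_mul]
    exact Finset.sum_congr rfl fun b _ => by ring
  have e2 : ∀ z : Euc d, (∏ c ∈ S.erase a, z (idx c)) *
      (-(2 * k) * z (idx a) * rexp (-k * quad A z)) =
      -(2 * k) * ((∏ c ∈ S, z (idx c)) * rexp (-k * quad A z)) := fun z => by
    rw [← Finset.mul_prod_erase S _ ha]; ring
  have h := integral_bilinear_hasLineDerivAt_right_eq_neg_left_of_integrable
    (μ := (volume : Measure (Euc d))) (B := ContinuousLinearMap.mul ℝ ℝ)
    (f := fun z : Euc d => ∏ c ∈ S.erase a, z (idx c))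
    (g := fun z : Euc d => rexp (-k * quad A z))
    (f' := fun z => ∑ b ∈ S.erase a, A⁻¹ (idx b) (idx a) * ∏ c ∈ (S.erase a).erase b, z (idx c))
    (g' := fun z => -(2 * k) * z (idx a) * rexp (-k * quad A z))
    (v := WithLp.toLp 2 fun j => A⁻¹ j (idx a))
    (by
      simp only [ContinuousLinearMap.mul_apply', e1]
      exact integrable_finsetSum _ fun b _ => (hint _).const_mul _)
    (by
      simp only [ContinuousLinearMap.mul_apply', e2]
      exact (hint S).const_mul _)
    (hint (S.erase a))
    (fun z _ => hasLineDerivAt_monomial (S.erase a) idx z _)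
    (fun z _ => hasLineDerivAt_gaussian hsymm hpd k (idx a) z)
  simp only [ContinuousLinearMap.mul_apply', e1, e2] at h
  rw [integral_const_mul, integral_finsetSum _ fun b _ => (hint _).const_mul _] at h
  simp only [integral_const_mul] at h
  linarith

/-! ### Pairings of a finite set -/

/-- `F` is a partition of `S` into two-element sets. The exactly-one-block formulation is used
instead of `Finpartition` so that blocks can be inserted and erased without dependent types. -/
def IsPairing {α : Type*} (S : Finset α) (F : Finset (Finset α)) : Prop :=
  (∀ p ∈ F, p.card = 2 ∧ p ⊆ S) ∧ ∀ a ∈ S, ∃! p, p ∈ F ∧ a ∈ p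

open Classical in
/-- The finite set of all partitions of `S` into pairs. -/
def pairings {α : Type*} (S : Finset α) : Finset (Finset (Finset α)) :=
  S.powerset.powerset.filter (IsPairing S)

lemma mem_pairings {α : Type*} {S : Finset α} {F : Finset (Finset α)} :
    F ∈ pairings S ↔ IsPairing S F := by
  classical
  simp only [pairings, Finset.mem_filter, Finset.mem_powerset, and_iff_right_iff_imp]
  intro h p hp
  exact Finset.mem_powerset.2 (h.1 p hp).2

lemma pairings_empty {α : Type*} : pairings (∅ : Finset α) = {∅} := by
  ext F
  rw [mem_pairings, Finset.mem_singleton]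
  constructor
  · intro h
    refine Finset.eq_empty_of_forall_notMem fun p hp => ?_
    have h1 := h.1 p hp
    have h2 : p = ∅ := Finset.subset_empty.1 h1.2
    simp [h2] at h1
  · rintro rfl
    simp [IsPairing]

lemma IsPairing.existsUnique_partner {α : Type*} [DecidableEq α] {S : Finset α}
    {F : Finset (Finset α)} (h : IsPairing S F) {a : α} (ha : a ∈ S) :
    ∃! b, b ∈ S.erase a ∧ ({a, b} : Finset α) ∈ F := by
  obtain ⟨p, ⟨hp, hap⟩, hu⟩ := h.2 a ha
  obtain ⟨hc, hs⟩ := h.1 p hp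
  have hc1 : (p.erase a).card = 1 := by rw [Finset.card_erase_of_mem hap, hc]
  obtain ⟨b, hb⟩ := Finset.card_eq_one.1 hc1
  have hpab : p = {a, b} := by rw [← Finset.insert_erase hap, hb]
  have hbp : b ∈ p.erase a := by simp [hb]
  refine ⟨b, ⟨Finset.erase_subset_erase a hs hbp, hpab ▸ hp⟩, ?_⟩
  rintro c ⟨hc, hcF⟩
  have h1 := hu _ ⟨hcF, by simp⟩
  have : c ∈ p.erase a := by
    rw [Finset.mem_erase, ← h1]
    exact ⟨(Finset.mem_erase.1 hc).1, by simp⟩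
  simpa [hb] using this

lemma IsPairing.erase_pair {α : Type*} [DecidableEq α] {S : Finset α}
    {F : Finset (Finset α)} (h : IsPairing S F) {a b : α}
    (hF : ({a, b} : Finset α) ∈ F) :
    IsPairing ((S.erase a).erase b) (F.erase {a, b}) := by
  have key : ∀ p ∈ F, ∀ x ∈ p, x ∈ ({a, b} : Finset α) → p = {a, b} := fun p hp x hx hx' =>
    (h.2 x ((h.1 p hp).2 hx)).unique ⟨hp, hx⟩ ⟨hF, hx'⟩
  constructor
  · intro p hp
    obtain ⟨hne, hp⟩ := Finset.mem_erase.1 hp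
    refine ⟨(h.1 p hp).1, fun x hx => ?_⟩
    have := mt (key p hp x hx) hne
    simp only [Finset.mem_insert, Finset.mem_singleton, not_or] at this
    simp [this, (h.1 p hp).2 hx]
  · intro x hx
    simp only [Finset.mem_erase] at hx
    obtain ⟨p, ⟨hp, hxp⟩, hu⟩ := h.2 x hx.2.2
    refine ⟨p, ⟨Finset.mem_erase.2 ⟨?_, hp⟩, hxp⟩, fun q hq =>
      hu q ⟨Finset.mem_of_mem_erase hq.1, hq.2⟩⟩
    rintro rfl
    simp [hx.1, hx.2.1] at hxp

lemma IsPairing.insert_pair {α : Type*} [DecidableEq α] {S : Finset α}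
    {F : Finset (Finset α)} {a b : α} (ha : a ∈ S) (hb : b ∈ S.erase a)
    (h : IsPairing ((S.erase a).erase b) F) :
    IsPairing S (insert {a, b} F) ∧ ({a, b} : Finset α) ∉ F := by
  obtain ⟨hne, hbS⟩ := Finset.mem_erase.1 hb
  have hnot : ({a, b} : Finset α) ∉ F := fun hF => by
    have := (h.1 _ hF).2 (show a ∈ ({a, b} : Finset α) by simp)
    simp at this
  have hd : ∀ p ∈ F, ∀ x ∈ p, x ≠ b ∧ x ≠ a ∧ x ∈ S := fun p hp x hx => by
    simpa using (h.1 p hp).2 hx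
  refine ⟨⟨?_, ?_⟩, hnot⟩
  · intro p hp
    rcases Finset.mem_insert.1 hp with rfl | hp
    · refine ⟨Finset.card_pair hne.symm, ?_⟩
      intro x hx
      simp only [Finset.mem_insert, Finset.mem_singleton] at hx
      rcases hx with rfl | rfl <;> assumption
    · exact ⟨(h.1 p hp).1, fun x hx => (hd p hp x hx).2.2⟩
  · intro x hx
    by_cases hxab : x = a ∨ x = b
    · refine ⟨{a, b}, ⟨by simp, by simpa using hxab⟩, ?_⟩
      rintro q ⟨hq, hxq⟩
      rcases Finset.mem_insert.1 hq with rfl | hq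
      · rfl
      · have := hd q hq x hxq
        tauto
    · push Not at hxab
      obtain ⟨p, ⟨hp, hxp⟩, hu⟩ := h.2 x (by simp [hxab, hx])
      refine ⟨p, ⟨by simp [hp], hxp⟩, ?_⟩
      rintro q ⟨hq, hxq⟩
      rcases Finset.mem_insert.1 hq with rfl | hq
      · simp [hxab] at hxq
      · exact hu q ⟨hq, hxq⟩

/-- Pairings of `S` are classified by the partner `b` of a fixed element `a`; removing the block
`{a, b}` leaves a pairing of the remaining elements. -/
theorem sum_pairings_eq {α : Type*} [DecidableEq α] (w : Finset α → ℝ) {S : Finset α} {a : α}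
    (ha : a ∈ S) :
    ∑ F ∈ pairings S, ∏ p ∈ F, w p =
      ∑ b ∈ S.erase a, w {a, b} * ∑ F ∈ pairings ((S.erase a).erase b), ∏ p ∈ F, w p := by
  have h1 : ∀ F ∈ pairings S, ∏ p ∈ F, w p =
      ∑ b ∈ S.erase a, if ({a, b} : Finset α) ∈ F then ∏ p ∈ F, w p else 0 := by
    intro F hF
    obtain ⟨b, ⟨hb, hbF⟩, hu⟩ := (mem_pairings.1 hF).existsUnique_partner ha
    rw [Finset.sum_eq_single_of_mem b hb, if_pos hbF]
    intro c hc hcb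
    rw [if_neg]
    exact fun h => hcb (hu c ⟨hc, h⟩)
  rw [Finset.sum_congr rfl h1, Finset.sum_comm]
  refine Finset.sum_congr rfl fun b hb => ?_
  rw [← Finset.sum_filter, Finset.mul_sum]
  refine Finset.sum_bij' (fun F _ => F.erase {a, b}) (fun F _ => insert {a, b} F) ?_ ?_ ?_ ?_ ?_
  · intro F hF
    rw [Finset.mem_filter, mem_pairings] at hF
    exact mem_pairings.2 (hF.1.erase_pair hF.2)
  · intro F hF
    rw [Finset.mem_filter, mem_pairings]
    exact ⟨((mem_pairings.1 hF).insert_pair ha hb).1, by simp⟩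
  · intro F hF
    exact Finset.insert_erase (Finset.mem_filter.1 hF).2
  · intro F hF
    exact Finset.erase_insert ((mem_pairings.1 hF).insert_pair ha hb).2
  · intro F hF
    exact (Finset.mul_prod_erase F w (Finset.mem_filter.1 hF).2).symm

theorem finsum_finpartition_eq {α : Type*} [DecidableEq α] (w : Finset α → ℝ) (S : Finset α) :
    ∑ᶠ P : {P : Finpartition S // ∀ p ∈ P.parts, p.card = 2},
      ∏ p ∈ (P : Finpartition S).parts, w p = ∑ F ∈ pairings S, ∏ p ∈ F, w p := by
  classical
  rw [finsum_eq_sum_of_fintype]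
  refine Finset.sum_bij (fun P _ => P.1.parts) ?_ ?_ ?_ ?_
  · intro P _
    exact mem_pairings.2 ⟨fun p hp => ⟨P.2 p hp, P.1.subset hp⟩,
      fun a ha => P.1.existsUnique_mem ha⟩
  · intro P _ Q _ h
    exact Subtype.ext (Finpartition.ext h)
  · intro F hF
    have h := mem_pairings.1 hF
    exact ⟨⟨Finpartition.ofExistsUnique F (fun p hp => (h.1 p hp).2) h.2
      (fun h0 => by simpa using (h.1 _ h0).1), fun p hp => (h.1 p hp).1⟩, Finset.mem_univ _, rfl⟩
  · intros; rfl

/-! ### Moments -/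

lemma pair_weight {d : ℕ} {A : Matrix (Fin d) (Fin d) ℝ} (hsymm : A.IsSymm)
    {ι : Type*} [DecidableEq ι] (idx : ι → Fin d) {a b : ι} (hab : a ≠ b) :
    1 / 2 * ∑ x ∈ ({a, b} : Finset ι), ∑ y ∈ ({a, b} : Finset ι).erase x, A⁻¹ (idx x) (idx y) =
      A⁻¹ (idx b) (idx a) := by
  have h1 : ({a, b} : Finset ι).erase a = {b} := by
    ext x; simp only [Finset.mem_erase, Finset.mem_insert, Finset.mem_singleton]; grind
  have h2 : ({a, b} : Finset ι).erase b = {a} := by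
    ext x; simp only [Finset.mem_erase, Finset.mem_insert, Finset.mem_singleton]; grind
  have hinv : A⁻¹.IsSymm := by
    rw [Matrix.IsSymm, Matrix.transpose_nonsing_inv, hsymm.eq]
  rw [Finset.sum_pair hab, h1, h2, Finset.sum_singleton, Finset.sum_singleton,
    hinv.apply (idx b) (idx a)]
  ring

/-- The moment formula for an arbitrary finite index set `S` of even cardinality. Induction on the
cardinality matches the integration-by-parts recursion with the recursion for pairings. -/
theorem moment_eq {d : ℕ} {A : Matrix (Fin d) (Fin d) ℝ} (hsymm : A.IsSymm)
    (hpd : A.PosDef) {ε : ℝ} (hε : 0 < ε) {ι : Type*} [DecidableEq ι] (idx : ι → Fin d) (n : ℕ) :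
    ∀ S : Finset ι, S.card = 2 * n →
      ∫ z : Euc d, (∏ a ∈ S, z (idx a)) * (√A.det * (2 * π * ε) ^ (-(d : ℝ) / 2) *
          rexp (-(1 / (2 * ε)) * quad A z)) =
        ε ^ n * ∑ F ∈ pairings S, ∏ p ∈ F,
          (1 / 2 * ∑ a ∈ p, ∑ b ∈ p.erase a, A⁻¹ (idx a) (idx b)) := by
  induction n with
  | zero =>
    intro S hS
    obtain rfl : S = ∅ := by simpa using hS
    simpa [pairings_empty] using integral_gaussian_quad hpd hε
  | succ n ih =>
    intro S hS
    obtain ⟨a, ha⟩ : S.Nonempty := Finset.card_pos.1 (by omega)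
    have key := integral_by_parts hsymm hpd (k := 1 / (2 * ε)) (by positivity) S idx ha
    have hk : 2 * (1 / (2 * ε)) = ε⁻¹ := by field_simp
    rw [hk, inv_mul_eq_iff_eq_mul₀ hε.ne'] at key
    have hc : ∀ (T : Finset ι), ∫ z : Euc d, (∏ a ∈ T, z (idx a)) *
        (√A.det * (2 * π * ε) ^ (-(d : ℝ) / 2) * rexp (-(1 / (2 * ε)) * quad A z)) =
        √A.det * (2 * π * ε) ^ (-(d : ℝ) / 2) *
          ∫ z : Euc d, (∏ a ∈ T, z (idx a)) * rexp (-(1 / (2 * ε)) * quad A z) := fun T => by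
      rw [← integral_const_mul]
      exact integral_congr_ae (Filter.Eventually.of_forall fun z => by ring)
    rw [hc, key, sum_pairings_eq _ ha, mul_left_comm, pow_succ', mul_assoc ε]
    congr 1
    rw [Finset.mul_sum, Finset.mul_sum]
    refine Finset.sum_congr rfl fun b hb => ?_
    have hba := Finset.ne_of_mem_erase hb
    have hcard : ((S.erase a).erase b).card = 2 * n := by
      rw [Finset.card_erase_of_mem hb, Finset.card_erase_of_mem ha]; omega
    have := ih _ hcard
    rw [hc] at this
    rw [pair_weight hsymm idx hba.symm, mul_left_comm, this]
    ring

/-- **Isserlis' formula** (Lemma 4.9 of the paper). The centered Gaussian moments of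
`p_ε(z) = √(det A) (2πε)^{-d/2} e^{-A_{ij} z^i z^j/(2ε)}` (covariance `ε A⁻¹`) are
`∫ z^{i_1} ⋯ z^{i_{2n}} p_ε(z) dz = ε^n ∑_P ∏_{{a,b} ∈ P} (A⁻¹)_{i_a i_b}`,
the sum running over all partitions `P` of `{1, …, 2n}` into pairs. For a pair
`p = {a, b}` the factor `(A⁻¹)_{i_a i_b}` is written symmetrically as
`(1/2) ∑_{a ∈ p} ∑_{b ∈ p \ {a}} (A⁻¹)_{i_a i_b}`. -/
theorem isserlis (d n : ℕ) (hd : 1 ≤ d) (hn : 1 ≤ n)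
    (A : Matrix (Fin d) (Fin d) ℝ) (hsymm : A.IsSymm) (hpd : A.PosDef)
    (ε : ℝ) (hε : 0 < ε) (idx : Fin (2 * n) → Fin d) :
    (∫ z : Euc d,
        (∏ a : Fin (2 * n), z (idx a)) *
          (Real.sqrt A.det * (2 * Real.pi * ε) ^ (-(d : ℝ) / 2) *
            Real.exp (-(1 / (2 * ε)) * ∑ i : Fin d, ∑ j : Fin d, A i j * z i * z j)))
      = ε ^ n *
        ∑ᶠ P : {P : Finpartition (Finset.univ : Finset (Fin (2 * n))) //
            ∀ p ∈ P.parts, p.card = 2},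
          ∏ p ∈ (P : Finpartition (Finset.univ : Finset (Fin (2 * n)))).parts,
            (1 / 2) * ∑ a ∈ p, ∑ b ∈ p.erase a, A⁻¹ (idx a) (idx b) := by
  rw [finsum_finpartition_eq (fun p : Finset (Fin (2 * n)) =>
    1 / 2 * ∑ a ∈ p, ∑ b ∈ p.erase a, A⁻¹ (idx a) (idx b)) Finset.univ]
  exact moment_eq hsymm hpd hε idx n Finset.univ (by simp)
end
end

section
/- Let X, Y ⊆ ℝ^d be open, let u ∈ C³(X × Y) with u ≥ 0, and let y : X → Y be a C² diffeomorphism onto its image with u(x, y(x)) = 0 for all x ∈ X and with the mixed Hessian [u_{ij̄}(x, y(x))] invertible, inverse denoted [u^{j̄i}]. Define, at each x ∈ X (Einstein summation, derivatives of u evaluated at (x, y(x))): h^k_{ij} := (1/2)( u^{m̄k} u_{ijm̄} − (∂x^k/∂y^{k̄}) (∂y^{ī}/∂x^i) (∂y^{j̄}/∂x^j) u^{k̄m} u_{mīj̄} − (∂x^k/∂y^{k̄}) ∂²y^{k̄}/∂x^i∂x^j ), and h_{ijk} := h^ℓ_{ij} · ∂²u/∂x^ℓ∂x^k(x, y(x)).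 Then h_{ijk} is totally symmetric: h_{ijk} = h_{σ(i)σ(j)σ(k)} for every permutation σ of the three indices, for all i, j, k ∈ {1, …, d} and all x ∈ X. -/
/-!
Write `U = [u_{ij̄}]`, `J = [∂y^{j̄}/∂x^i]`, `G = [u_{ij}]`, all along the graph of `y`. As `u ≥ 0`
vanishes on the graph, so does `Du`. Differentiating `Du (x, y x) = 0` once gives `G = -U J`
(`tangent_first`), and since `G` is symmetric this removes all inverse matrices from
`h_{ijk} = h^l_{ij} G_{lk}` (`contract_metric`):
`2 h_{ijk} = -u_{ijm̄} J^m̄_k + u_{kīj̄} J^ī_i J^j̄_j + u_{km̄} ∂²y^m̄/∂x^i∂x^j`.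
Differentiating once more (`tangent_second`) expresses the last two terms through
`u_{ijk}`, `u_{kim̄} J^m̄_j` and `u_{kjm̄} J^m̄_i`. The result (`hcov_eq`) is
`-2 h_{ijk} = u_{ijk} + u_{ijm̄} J^m̄_k + u_{ikm̄} J^m̄_j + u_{jkm̄} J^m̄_i`,
which is symmetric because the third derivative of a `C³` function is.
-/

open MeasureTheory Real

noncomputable section

/-- Jacobian matrix `[∂y^{j̄}/∂x^j]` of the map `y : X → Y` (first index barred). -/
noncomputable def Jmat {d : ℕ} (ymap : Euc d → Euc d) (x : Euc d) :
    Matrix (Fin d) (Fin d) ℝ :=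
  Matrix.of fun jb j => fderiv ℝ ymap x (EuclideanSpace.single j (1 : ℝ)) jb

/-- Mixed Hessian `[u_{ij̄}] = [∂²u/∂x^i∂y^{j̄}]` along the graph `(x, y(x))`. -/
noncomputable def Umix {d : ℕ} (u : Euc d × Euc d → ℝ) (ymap : Euc d → Euc d)
    (x : Euc d) : Matrix (Fin d) (Fin d) ℝ :=
  Matrix.of fun i jb => iteratedFDeriv ℝ 2 u (x, ymap x)
    ![(EuclideanSpace.single i (1 : ℝ), 0), ((0 : Euc d), EuclideanSpace.single jb (1 : ℝ))]

/-- Second fundamental form of the graph in the Kim–McCann geometry: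
`h^k_{ij} = (1/2)( u^{m̄k} u_{ijm̄} − (∂x^k/∂y^{k̄})(∂y^{ī}/∂x^i)(∂y^{j̄}/∂x^j) u^{k̄m} u_{mīj̄}
  − (∂x^k/∂y^{k̄}) ∂²y^{k̄}/∂x^i∂x^j )`. -/
noncomputable def hup {d : ℕ} (u : Euc d × Euc d → ℝ) (ymap : Euc d → Euc d)
    (x : Euc d) (k i j : Fin d) : ℝ :=
  (1 / 2) *
    ((∑ mb : Fin d, (Umix u ymap x)⁻¹ mb k *
        iteratedFDeriv ℝ 3 u (x, ymap x)
          ![(EuclideanSpace.single i (1 : ℝ), 0), (EuclideanSpace.single j (1 : ℝ), 0),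
            ((0 : Euc d), EuclideanSpace.single mb (1 : ℝ))])
      - (∑ kb : Fin d, ∑ ib : Fin d, ∑ jb : Fin d, ∑ m : Fin d,
          (Jmat ymap x)⁻¹ k kb * Jmat ymap x ib i * Jmat ymap x jb j *
            (Umix u ymap x)⁻¹ kb m *
            iteratedFDeriv ℝ 3 u (x, ymap x)
              ![(EuclideanSpace.single m (1 : ℝ), 0),
                ((0 : Euc d), EuclideanSpace.single ib (1 : ℝ)),
                ((0 : Euc d), EuclideanSpace.single jb (1 : ℝ))])
      - (∑ kb : Fin d, (Jmat ymap x)⁻¹ k kb *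
          iteratedFDeriv ℝ 2 ymap x
            ![EuclideanSpace.single i (1 : ℝ), EuclideanSpace.single j (1 : ℝ)] kb))

/-- Fully covariant second fundamental form `h_{ijk} = h^ℓ_{ij} u_{ℓk}(x, y(x))`. -/
noncomputable def hcov {d : ℕ} (u : Euc d × Euc d → ℝ) (ymap : Euc d → Euc d)
    (x : Euc d) (i j k : Fin d) : ℝ :=
  ∑ l : Fin d, hup u ymap x l i j *
    iteratedFDeriv ℝ 2 u (x, ymap x)
      ![(EuclideanSpace.single l (1 : ℝ), 0), (EuclideanSpace.single k (1 : ℝ), 0)]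


open scoped Matrix in
/-- Lowering the upper index of `h^k_{ij}` with `G = [u_{kl}]`. Since `G = -U J` is symmetric,
`U⁻¹ G = -J` and `G J⁻¹ = -U`, so every inverse matrix cancels. Here `A`, `B`, `P` play the roles
of `u_{ijm̄}`, `u_{mīj̄} J^ī_i J^j̄_j` and `∂²y^{k̄}/∂x^i∂x^j`. -/
theorem contract_metric {d : ℕ} (U J G : Matrix (Fin d) (Fin d) ℝ)
    (hU : IsUnit U.det) (hJ : IsUnit J.det) (hG : G = -(U * J)) (hs : Gᵀ = G)
    (A B P : Fin d → ℝ) :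
    (A ᵥ* U⁻¹ - J⁻¹ *ᵥ (U⁻¹ *ᵥ B) - J⁻¹ *ᵥ P) ᵥ* G = -(A ᵥ* J) + B + U *ᵥ P := by
  have h1 : U⁻¹ * G = -J := by
    rw [hG, Matrix.mul_neg, Matrix.nonsing_inv_mul_cancel_left _ _ hU]
  have h2 : G * J⁻¹ = -U := by
    rw [hG, Matrix.neg_mul, Matrix.mul_nonsing_inv_cancel_right _ _ hJ]
  have h3 (w : Fin d → ℝ) : (J⁻¹ *ᵥ w) ᵥ* G = -(U *ᵥ w) := by
    rw [← hs, Matrix.vecMul_transpose, Matrix.mulVec_mulVec, h2, Matrix.neg_mulVec]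
  rw [Matrix.sub_vecMul, Matrix.sub_vecMul, h3, h3, Matrix.vecMul_vecMul, h1, Matrix.vecMul_neg,
    Matrix.mulVec_mulVec, Matrix.mul_nonsing_inv _ hU, Matrix.one_mulVec]
  abel

theorem iteratedFDeriv_two_vec {E F : Type*} [NormedAddCommGroup E] [NormedSpace ℝ E]
    [NormedAddCommGroup F] [NormedSpace ℝ F] (u : E → F) (p a b : E) :
    iteratedFDeriv ℝ 2 u p ![a,b] = fderiv ℝ (fderiv ℝ u) p a b := by
  rw [iteratedFDeriv_two_apply]; rfl

theorem iteratedFDeriv_three_vec {E F : Type*} [NormedAddCommGroup E] [NormedSpace ℝ E]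
    [NormedAddCommGroup F] [NormedSpace ℝ F] (u : E → F) (p a b c : E) :
    iteratedFDeriv ℝ 3 u p ![a,b,c] = fderiv ℝ (fderiv ℝ (fderiv ℝ u)) p a b c := by
  rw [iteratedFDeriv_succ_apply_right, iteratedFDeriv_two_apply]; rfl

section
variable {E : Type*} [NormedAddCommGroup E] [NormedSpace ℝ E]

theorem third_symm_left {u : E → ℝ} {p : E} (hu : ContDiffAt ℝ 3 u p) (a b c : E) :
    fderiv ℝ (fderiv ℝ (fderiv ℝ u)) p a b c = fderiv ℝ (fderiv ℝ (fderiv ℝ u)) p b a c := by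
  have h : ContDiffAt ℝ 2 (fderiv ℝ u) p := hu.fderiv_right (by norm_num)
  rw [(h.isSymmSndFDerivAt (by simp)) a b]

/-- The Hessian of `u` is symmetric near `p`; differentiating this identity gives the symmetry of
the third derivative in its last two arguments. -/
theorem third_symm_right {u : E → ℝ} {p : E} (hu : ContDiffAt ℝ 3 u p) (a b c : E) :
    fderiv ℝ (fderiv ℝ (fderiv ℝ u)) p a b c = fderiv ℝ (fderiv ℝ (fderiv ℝ u)) p a c b := by
  have h1 : ContDiffAt ℝ 2 (fderiv ℝ u) p := hu.fderiv_right (by norm_num)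
  have h2 : ContDiffAt ℝ 1 (fderiv ℝ (fderiv ℝ u)) p := h1.fderiv_right (by norm_num)
  have hd := (h2.differentiableAt (by norm_num)).hasFDerivAt
  have key (b c : E) : HasFDerivAt (fun q => fderiv ℝ (fderiv ℝ u) q b c)
      (((fderiv ℝ (fderiv ℝ (fderiv ℝ u)) p).flip b).flip c) p := by
    have := (hd.clm_apply (hasFDerivAt_const b p)).clm_apply (hasFDerivAt_const c p)
    refine this.congr_fderiv ?_
    ext v; simp
  have hev : (fun q => fderiv ℝ (fderiv ℝ u) q b c) =ᶠ[nhds p]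
      fun q => fderiv ℝ (fderiv ℝ u) q c b := by
    filter_upwards [hu.eventually (by simp)] with q hq
    exact hq.isSymmSndFDerivAt (by simp; norm_num) b c
  have := (key b c).unique ((key c b).congr_of_eventuallyEq hev)
  simpa using congrArg (fun L => L a) this

/-- Every point of the graph minimizes `u`, so `Du` vanishes along it; this is the derivative of
`Du (x, y x) = 0` in the direction `a`. -/
theorem tangent_first {X Y : Set E} (hX : IsOpen X) (hY : IsOpen Y) {u : E × E → ℝ}
    (hu : ContDiffOn ℝ 3 u (X ×ˢ Y)) (hnn : ∀ p ∈ X ×ˢ Y, 0 ≤ u p) {y : E → E}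
    (hy : ContDiffOn ℝ 2 y X) (hyY : ∀ x ∈ X, y x ∈ Y) (hzero : ∀ x ∈ X, u (x, y x) = 0)
    {x : E} (hx : x ∈ X) (a : E) :
    fderiv ℝ (fderiv ℝ u) (x, y x) (a, fderiv ℝ y x a) = 0 := by
  have hopen := hX.prod hY
  have hcrit : (fun x => fderiv ℝ u (x, y x)) =ᶠ[nhds x] fun _ => 0 := by
    filter_upwards [hX.mem_nhds hx] with z hz
    refine IsLocalMin.fderiv_eq_zero ?_
    filter_upwards [hopen.mem_nhds (Set.mk_mem_prod hz (hyY z hz))] with q hq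
    rw [hzero z hz]; exact hnn q hq
  have hyd := ((hy.contDiffAt (hX.mem_nhds hx)).differentiableAt (by norm_num)).hasFDerivAt
  have hu3 := hu.contDiffAt (hopen.mem_nhds (Set.mk_mem_prod hx (hyY x hx)))
  have h1 : ContDiffAt ℝ 2 (fderiv ℝ u) (x, y x) := hu3.fderiv_right (by norm_num)
  have hF := (h1.differentiableAt (by norm_num)).hasFDerivAt
  have hc := hF.comp x ((hasFDerivAt_id x).prodMk hyd)
  have := hc.unique ((hasFDerivAt_const _ x).congr_of_eventuallyEq hcrit)
  simpa using congrArg (fun L => L a) this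

/-- The derivative of the identity of `tangent_first` (with `b` for `a`) in the direction `a`. -/
theorem tangent_second {X Y : Set E} (hX : IsOpen X) (hY : IsOpen Y) {u : E × E → ℝ}
    (hu : ContDiffOn ℝ 3 u (X ×ˢ Y)) (hnn : ∀ p ∈ X ×ˢ Y, 0 ≤ u p) {y : E → E}
    (hy : ContDiffOn ℝ 2 y X) (hyY : ∀ x ∈ X, y x ∈ Y) (hzero : ∀ x ∈ X, u (x, y x) = 0)
    {x : E} (hx : x ∈ X) (a b : E) :
    fderiv ℝ (fderiv ℝ (fderiv ℝ u)) (x, y x) (a, fderiv ℝ y x a) (b, fderiv ℝ y x b)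
      + fderiv ℝ (fderiv ℝ u) (x, y x) (0, fderiv ℝ (fderiv ℝ y) x a b) = 0 := by
  have hopen := hX.prod hY
  have hev : (fun x => fderiv ℝ (fderiv ℝ u) (x, y x) (b, fderiv ℝ y x b))
      =ᶠ[nhds x] fun _ => 0 := by
    filter_upwards [hX.mem_nhds hx] with z hz
    exact tangent_first hX hY hu hnn hy hyY hzero hz b
  have hy2 := hy.contDiffAt (hX.mem_nhds hx)
  have hyd := (hy2.differentiableAt (by norm_num)).hasFDerivAt
  have hy1 : ContDiffAt ℝ 1 (fderiv ℝ y) x := hy2.fderiv_right (by norm_num)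
  have hydd := (hy1.differentiableAt (by norm_num)).hasFDerivAt
  have hu3 := hu.contDiffAt (hopen.mem_nhds (Set.mk_mem_prod hx (hyY x hx)))
  have h1 : ContDiffAt ℝ 2 (fderiv ℝ u) (x, y x) := hu3.fderiv_right (by norm_num)
  have h2 : ContDiffAt ℝ 1 (fderiv ℝ (fderiv ℝ u)) (x, y x) := h1.fderiv_right (by norm_num)
  have hF := (h2.differentiableAt (by norm_num)).hasFDerivAt
  have hc := (hF.comp x ((hasFDerivAt_id x).prodMk hyd)).clm_apply
    ((hasFDerivAt_const b x).prodMk (hydd.clm_apply (hasFDerivAt_const b x)))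
  have := hc.unique ((hasFDerivAt_const _ x).congr_of_eventuallyEq hev)
  have := congrArg (fun L => L a) this
  simp at this
  rw [add_comm]; exact this
end

theorem inr_eq_sum {d : ℕ} (w : Euc d) :
    ((0 : Euc d), w) = ∑ m, w m • ((0 : Euc d), EuclideanSpace.single m (1 : ℝ)) := by
  have hw : w = ∑ m, w m • EuclideanSpace.single m (1 : ℝ) := by
    ext n; simp [Finset.sum_apply, Pi.single_apply]
  have := congrArg (ContinuousLinearMap.inr ℝ (Euc d) (Euc d)) hw
  rw [map_sum] at this
  simpa using this

open scoped Matrix in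
/-- A manifestly symmetric formula for the covariant second fundamental form:
`-2 h_{ijk} = u_{ijk} + u_{ijm̄} J^m̄_k + u_{im̄k} J^m̄_j + u_{m̄jk} J^m̄_i`.
The vectors `e i` and `f i` are the `X`- and `Y`-components of the tangent vector of the graph over
the `i`-th coordinate direction. -/
theorem hcov_eq {d : ℕ}
    {X Y : Set (Euc d)} (hX : IsOpen X) (hY : IsOpen Y)
    {u : Euc d × Euc d → ℝ}
    (hu : ContDiffOn ℝ 3 u (X ×ˢ Y))
    (hnn : ∀ p ∈ X ×ˢ Y, 0 ≤ u p)
    {y : Euc d → Euc d}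
    (hy : ContDiffOn ℝ 2 y X)
    (hyY : ∀ x ∈ X, y x ∈ Y)
    (hJ : ∀ x ∈ X, IsUnit (Jmat y x).det)
    (hUinv : ∀ x ∈ X, IsUnit (Umix u y x).det)
    (hzero : ∀ x ∈ X, u (x, y x) = 0) {x : Euc d} (hx : x ∈ X) (i j k : Fin d) :
    let T := fderiv ℝ (fderiv ℝ (fderiv ℝ u)) (x, y x)
    let e : Fin d → Euc d × Euc d := fun i => (EuclideanSpace.single i 1, 0)
    let f : Fin d → Euc d × Euc d := fun i => (0, fderiv ℝ y x (EuclideanSpace.single i 1))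
    hcov u y x i j k = -(1 / 2) * (T (e i) (e j) (e k) + T (e i) (e j) (f k)
      + T (e i) (f j) (e k) + T (f i) (e j) (e k)) := by
  intro T e f
  set H := fderiv ℝ (fderiv ℝ u) (x, y x) with hH
  set g : Fin d → Euc d × Euc d := fun i => (0, EuclideanSpace.single i 1) with hg
  have hu3 := hu.contDiffAt ((hX.prod hY).mem_nhds (Set.mk_mem_prod hx (hyY x hx)))
  have Hsymm (a b) : H a b = H b a := hu3.isSymmSndFDerivAt (by simp; norm_num) a b
  have Tl (a b c) : T a b c = T b a c := third_symm_left hu3 a b c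
  have Tr (a b c) : T a b c = T a c b := third_symm_right hu3 a b c
  have hf (i) : f i = ∑ m, Jmat y x m i • g m := inr_eq_sum _
  have hL (i) : (EuclideanSpace.single i 1, fderiv ℝ y x (EuclideanSpace.single i 1))
      = e i + f i := by simp [e, f]
  have first (i) : H (e i) + H (f i) = 0 := by
    rw [← map_add, ← hL]; exact tangent_first hX hY hu hnn hy hyY hzero hx _
  set y2 : Euc d := fderiv ℝ (fderiv ℝ y) x (EuclideanSpace.single i 1)
    (EuclideanSpace.single j 1) with hy2
  have second : T (e i + f i) (e j + f j) + H (0, y2) = 0 := by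
    rw [← hL, ← hL]; exact tangent_second hX hY hu hnn hy hyY hzero hx _ _
  set G : Matrix (Fin d) (Fin d) ℝ := Matrix.of fun l k => H (e l) (e k) with hGdef
  have hU (l m) : Umix u y x l m = H (e l) (g m) := iteratedFDeriv_two_vec _ _ _ _
  have hG : G = -(Umix u y x * Jmat y x) := by
    ext l k
    have h := congrArg (fun L => L (e l)) (first k)
    simp only [_root_.add_apply, _root_.zero_apply] at h
    rw [Hsymm _ (e l), Hsymm _ (e l), hf, map_sum] at h
    simp only [map_smul, smul_eq_mul] at h
    simp only [Matrix.neg_apply, Matrix.mul_apply, hU, hGdef, Matrix.of_apply]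
    simp only [mul_comm (H _ _)]
    linarith
  have hGs : Gᵀ = G := by ext l k; exact Hsymm _ _
  -- The three groups of terms in `h^l_{ij}`, as vectors to be contracted with `U⁻¹` and `J⁻¹`.
  set A : Fin d → ℝ := fun m => T (e i) (e j) (g m) with hA
  set B : Fin d → ℝ := fun m => T (e m) (f i) (f j) with hB
  set P : Fin d → ℝ := fun m => y2 m with hP
  have hBsum (m) : B m = ∑ ib, ∑ jb, Jmat y x ib i * Jmat y x jb j * T (e m) (g ib) (g jb) := by
    simp only [hB]
    rw [hf i, hf j]
    simp only [map_sum, map_smul, _root_.sum_apply, _root_.smul_apply,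
      smul_eq_mul, Finset.mul_sum, mul_assoc]
    rw [Finset.sum_comm]
    refine Finset.sum_congr rfl fun _ _ => Finset.sum_congr rfl fun _ _ => by ring
  have hup_eq (l) : hup u y x l i j = (1 / 2) * (A ᵥ* (Umix u y x)⁻¹
      - (Jmat y x)⁻¹ *ᵥ ((Umix u y x)⁻¹ *ᵥ B) - (Jmat y x)⁻¹ *ᵥ P) l := by
    simp only [hup, iteratedFDeriv_two_vec, iteratedFDeriv_three_vec, Pi.sub_apply,
      Matrix.vecMul, Matrix.mulVec, dotProduct]
    congr 2
    · congr 1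
      · exact Finset.sum_congr rfl fun _ _ => mul_comm _ _
      · refine Finset.sum_congr rfl fun kb _ => ?_
        simp only [hBsum, Finset.mul_sum]
        refine Eq.trans (Finset.sum_congr rfl fun ib _ => ?_) Finset.sum_comm
        refine Eq.trans (Finset.sum_congr rfl fun jb _ => ?_) Finset.sum_comm
        exact Finset.sum_congr rfl fun m _ => by ring
  have hc := congrFun (contract_metric _ _ G (hUinv x hx) (hJ x hx) hG hGs A B P) k
  have hcov1 : hcov u y x i j k = (1 / 2) * (-(A ᵥ* Jmat y x) + B + Umix u y x *ᵥ P) k := by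
    rw [← hc]
    simp only [hcov, hup_eq, iteratedFDeriv_two_vec, Matrix.vecMul, dotProduct, Finset.mul_sum, mul_assoc]
    rfl
  have hAk : (A ᵥ* Jmat y x) k = T (e i) (e j) (f k) := by
    rw [hf k]; simp [Matrix.vecMul, dotProduct, hA, mul_comm]
  have hPk : (Umix u y x *ᵥ P) k = H (e k) (0, y2) := by
    have hy2g : ((0 : Euc d), y2) = ∑ m, P m • g m := inr_eq_sum y2
    rw [hy2g]; simp [Matrix.mulVec, dotProduct, hU, mul_comm]
  -- `second` eliminates `B k + H (e k) (0, y2)`, leaving only third derivatives of `u` with at most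
  -- one barred index.
  have h := congrArg (fun L => L (e k)) second
  simp only [_root_.add_apply, _root_.zero_apply, map_add] at h
  rw [Hsymm _ (e k), Tr (f i) (f j) (e k), Tl (f i) (e k) (f j)] at h
  rw [hcov1]
  simp only [Pi.add_apply, Pi.neg_apply, hAk, hPk, hB]
  linarith

/-- **Total symmetry of the second fundamental form** (Proposition 3.4 of the paper):
the fully covariant second fundamental form `h_{ijk}` of the graph `Σ = {(x, y(x))}` in
the Kim–McCann geometry is invariant under every permutation of its three indices. -/
theorem second_fundamental_form_totally_symmetric {d : ℕ}
    (X Y : Set (Euc d)) (hX : IsOpen X) (hY : IsOpen Y)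
    (u : Euc d × Euc d → ℝ)
    (hu : ContDiffOn ℝ 3 u (X ×ˢ Y))
    (hnn : ∀ p ∈ X ×ˢ Y, 0 ≤ u p)
    (ymap : Euc d → Euc d)
    (hy : ContDiffOn ℝ 2 ymap X)
    (hyY : ∀ x ∈ X, ymap x ∈ Y)
    (hinj : Set.InjOn ymap X)
    (hJ : ∀ x ∈ X, IsUnit (Jmat ymap x).det)
    (hUinv : ∀ x ∈ X, IsUnit (Umix u ymap x).det)
    (hzero : ∀ x ∈ X, u (x, ymap x) = 0) :
    ∀ x ∈ X, ∀ σ : Equiv.Perm (Fin 3), ∀ v : Fin 3 → Fin d,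
      hcov u ymap x (v 0) (v 1) (v 2)
        = hcov u ymap x (v (σ 0)) (v (σ 1)) (v (σ 2)) := by
  intro x hx σ
  have hu3 := hu.contDiffAt ((hX.prod hY).mem_nhds (Set.mk_mem_prod hx (hyY x hx)))
  let T := fderiv ℝ (fderiv ℝ (fderiv ℝ u)) (x, ymap x)
  let e : Fin d → Euc d × Euc d := fun i => (EuclideanSpace.single i 1, 0)
  let f : Fin d → Euc d × Euc d := fun i => (0, fderiv ℝ ymap x (EuclideanSpace.single i 1))
  have hh (i j k) : hcov u ymap x i j k = -(1 / 2) * (T (e i) (e j) (e k) + T (e i) (e j) (f k)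
      + T (e i) (f j) (e k) + T (f i) (e j) (e k)) :=
    hcov_eq hX hY hu hnn hy hyY hJ hUinv hzero hx i j k
  have Tl (a b c) : T a b c = T b a c := third_symm_left hu3 a b c
  have Tr (a b c) : T a b c = T a c b := third_symm_right hu3 a b c
  have h01 (i j k) : hcov u ymap x i j k = hcov u ymap x j i k := by
    rw [hh, hh, Tl (e i) (e j) (e k), Tl (e i) (e j) (f k), Tl (e i) (f j) (e k),
      Tl (f i) (e j) (e k)]
    ring
  have h12 (i j k) : hcov u ymap x i j k = hcov u ymap x i k j := by
    rw [hh, hh, Tr (e i) (e j) (e k), Tr (e i) (e j) (f k), Tr (e i) (f j) (e k),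
      Tr (f i) (e j) (e k)]
    ring
  intro v
  -- The two adjacent transpositions generate all six permutations.
  have n01 : σ 0 ≠ σ 1 := σ.injective.ne (by decide)
  have n02 : σ 0 ≠ σ 2 := σ.injective.ne (by decide)
  have n12 : σ 1 ≠ σ 2 := σ.injective.ne (by decide)
  generalize σ 0 = a at *
  generalize σ 1 = b at *
  generalize σ 2 = c at *
  fin_cases a <;> fin_cases b <;> fin_cases c <;> first
    | exact absurd rfl n01
    | exact absurd rfl n02
    | exact absurd rfl n12
    | exact rfl
    | exact h01 _ _ _
    | exact h12 _ _ _
    | exact (h01 _ _ _).trans (h12 _ _ _)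
    | exact (h12 _ _ _).trans (h01 _ _ _)
    | exact (h01 _ _ _).trans ((h12 _ _ _).trans (h01 _ _ _))
end
end

section
/- Let α > 0, let X ⊆ ℝ^d be a convex open set, and let f : X → ℝ be differentiable and such that the function x ↦ e^{α f(x)} is convex on X. Then for all x, y ∈ X with 1 + α⟨∇f(y), x − y⟩ > 0, the log-divergence u(x, y) := f(x) − f(y) − (1/α) log(1 + α⟨∇f(y), x − y⟩) satisfies u(x, y) ≥ 0, and u(x, x) = 0 for all x ∈ X. -/
/-!
The function `g = e^{αf}` is convex, so it lies above its tangent plane at `y`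
(`ConvexOn.tangent_le`): `e^{αf(x)} ≥ e^{αf(y)} (1 + α ⟨∇f(y), x - y⟩)`. Dividing by `e^{αf(y)}`,
taking logarithms and dividing by `α > 0` gives nonnegativity of the log-divergence.
On the diagonal the logarithm is `log 1 = 0`.
-/

open MeasureTheory Real

noncomputable section

/-- First-order convexity inequality: a convex function lies above its tangent plane. It is the
one-variable slope bound for the restriction of `g` to the line from `y` to `x`. -/
theorem ConvexOn.tangent_le {d : ℕ} {X : Set (Euc d)} {g : Euc d → ℝ} (hg : ConvexOn ℝ X g)
    {x y : Euc d} (hx : x ∈ X) (hy : y ∈ X) {g' : Euc d →L[ℝ] ℝ} (hd : HasFDerivAt g g' y) :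
    g y + g' (x - y) ≤ g x := by
  have hline := hg.comp_affineMap (AffineMap.lineMap (k := ℝ) y x)
  have hderiv : HasDerivAt (g ∘ AffineMap.lineMap (k := ℝ) y x) (g' (x - y)) 0 :=
    HasFDerivAt.comp_hasDerivAt (0 : ℝ) (by simpa using hd) AffineMap.hasDerivAt_lineMap
  have h := hline.le_slope_of_hasDerivAt (x := 0) (y := 1) (by simpa using hy)
    (by simpa using hx) one_pos hderiv
  simp [slope_def_field] at h
  simp only [map_sub]
  linarith

/-- **Nonnegativity of the log-divergence** (Example 2.5 of the paper): if `e^{αf}` is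
convex on a convex open set `X`, then
`u(x,y) = f(x) − f(y) − (1/α) log(1 + α⟨∇f(y), x − y⟩) ≥ 0` whenever the argument of the
logarithm is positive, and `u(x,x) = 0`. The pairing `⟨∇f(y), v⟩` is the directional
derivative `fderiv ℝ f y v`. -/
theorem log_divergence_nonneg {d : ℕ} (α : ℝ) (hα : 0 < α)
    (X : Set (Euc d)) (hXopen : IsOpen X) (hXconv : Convex ℝ X)
    (f : Euc d → ℝ) (hf : DifferentiableOn ℝ f X)
    (hconv : ConvexOn ℝ X fun x => Real.exp (α * f x)) :
    (∀ x ∈ X, ∀ y ∈ X, 0 < 1 + α * fderiv ℝ f y (x - y) →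
        0 ≤ f x - f y - (1 / α) * Real.log (1 + α * fderiv ℝ f y (x - y))) ∧
      ∀ x ∈ X, f x - f x - (1 / α) * Real.log (1 + α * fderiv ℝ f x (x - x)) = 0 := by
  refine ⟨fun x hx y hy hpos => ?_, fun x _ => by simp⟩
  have hfy : HasFDerivAt f (fderiv ℝ f y) y :=
    (hf.differentiableAt (hXopen.mem_nhds hy)).hasFDerivAt
  have htangent := hconv.tangent_le hx hy (hfy.const_mul α).exp
  simp only [smul_apply, smul_eq_mul] at htangent
  -- Dividing by `e^{αf(y)}` turns the tangent inequality into one for the argument of the log.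
  have hle : 1 + α * fderiv ℝ f y (x - y) ≤ Real.exp (α * f x - α * f y) := by
    rw [Real.exp_sub, le_div_iff₀ (Real.exp_pos _)]
    linarith
  have hlog := (Real.log_le_iff_le_exp hpos).2 hle
  have hdiv : (1 / α) * Real.log (1 + α * fderiv ℝ f y (x - y)) ≤ f x - f y := by
    rw [one_div, inv_mul_le_iff₀ hα]
    linarith
  linarith
end
end
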